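/- For every integer r ≥ 1 there exists a constant K < ∞ depending only on r such that for every ω ∈ LO_0 and every t ≥ 1, ∫ |X(η)|^r dP_t(ω, dη) ≤ K·t^r (the integral being over η ∈ LO). -/

import Mathlib

open MeasureTheory ProbabilityTheory Filter Topology

noncomputable section

/-- The configuration space of the East model on `ℤ`: `0` ↔ `false` (empty), `1` ↔ `true`. -/
abbrev Config : Type := ℤ → Bool

/-- The configuration `ω` flipped at site `x`. -/
def flipAt (ω : Config) (x : ℤ) : Config := fun y => if y = x then !ω x else ω y

/-- `f` depends only on the coordinates in `S`. -/
def DependsOnF (f : Config → ℝ) (S : Set ℤ) : Prop :=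
  ∀ ω ω' : Config, (∀ x ∈ S, ω x = ω' x) → f ω = f ω'

/-- The set `A` depends only on the coordinates in `S`. -/
def DependsOnSet (A : Set Config) (S : Set ℤ) : Prop :=
  ∀ ω ω' : Config, (∀ x ∈ S, ω x = ω' x) → (ω ∈ A ↔ ω' ∈ A)

/-- A cylinder (local) function: depends on finitely many coordinates. -/
def IsCylinder (f : Config → ℝ) : Prop := ∃ S : Finset ℤ, DependsOnF f ↑S

/-- The East generator at density `p` of ones. -/
def eastGen (p : ℝ) (f : Config → ℝ) (ω : Config) : ℝ :=
  ∑' x : ℤ, (if ω (x + 1) = false then (1 : ℝ) else 0) *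
    (if ω x = false then p else 1 - p) * (f (flipAt ω x) - f ω)

/-- Spatial translation: `(shift y ω) x = ω (x + y)`. -/
def shift (y : ℤ) (ω : Config) : Config := fun x => ω (x + y)

/-- Left-occupied configurations: identically `1` on a left half-line, with an empty site. -/
def LO : Set Config := {ω | (∃ y : ℤ, ∀ x < y, ω x = true) ∧ ∃ x, ω x = false}

/-- The front: position of the left-most zero. -/
def front (ω : Config) : ℤ := sInf {x : ℤ | ω x = false}

/-- Left-occupied configurations with front at the origin. -/
def LO₀ : Set Config := {ω ∈ LO | front ω = 0}

/-- The configuration seen at distance `L` behind the front. -/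
def θL (L : ℤ) (ω : Config) : Config := fun x =>
  if x < 0 then true else if x = 0 then false else ω (front ω + L + x)

/-- `f` averaged over the coordinate at site `1` w.r.t. Bernoulli(p). -/
def avg1 (p : ℝ) (f : Config → ℝ) (ω : Config) : ℝ :=
  p * f (Function.update ω 1 true) + (1 - p) * f (Function.update ω 1 false)

/-- The East process on `ℤ` at density `p`, together with its equilibrium measure. -/
structure EastProcess where
  /-- equilibrium density of ones -/
  p : ℝ
  hp0 : 0 < p
  hp1 : p < 1
  /-- the Markov semigroup -/
  P : ℝ → Kernel Config Config
  markov : ∀ t : ℝ, IsMarkovKernel (P t)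
  P0 : P 0 = Kernel.id
  semigroup : ∀ s t : ℝ, 0 ≤ s → 0 ≤ t → P (t + s) = (P s).comp (P t)
  feller : ∀ t : ℝ, 0 ≤ t → ∀ f : Config → ℝ, Continuous f →
    Continuous fun ω : Config => ∫ η, f η ∂(P t ω)
  timeCont : ∀ f : Config → ℝ, Continuous f → ∀ ω : Config,
    Continuous fun t : ℝ => ∫ η, f η ∂(P t ω)
  shiftComm : ∀ t : ℝ, 0 ≤ t → ∀ y : ℤ, ∀ ω : Config,
    P t (shift y ω) = Measure.map (shift y) (P t ω)
  generator : ∀ f : Config → ℝ, IsCylinder f → ∀ ω : Config,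
    HasDerivWithinAt (fun u : ℝ => ∫ η, f η ∂(P u ω)) (eastGen p f ω) (Set.Ici 0) 0
  /-- the product Bernoulli(p) measure -/
  μ : Measure Config
  μprob : IsProbabilityMeasure μ
  μprod : ∀ (S : Finset ℤ) (σ : ℤ → Bool),
    μ {ω : Config | ∀ x ∈ S, ω x = σ x} = ∏ x ∈ S, ENNReal.ofReal (if σ x then p else 1 - p)
  /-- LO is stable for the dynamics -/
  loStable : ∀ t : ℝ, 0 ≤ t → ∀ ω ∈ LO, P t ω LO = 1

/-- The set of Rayleigh quotients defining the spectral gap. -/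
def gapSet (E : EastProcess) : Set ℝ :=
  {r | ∃ f : Config → ℝ, IsCylinder f ∧ 0 < variance f E.μ ∧
    r = (-∫ ω, f ω * eastGen E.p f ω ∂E.μ) / variance f E.μ}

/-- The spectral gap of the East process. -/
def gap (E : EastProcess) : ℝ := sInf (gapSet E)

/-- The product measure `μ̃`: all ones on the negative half-line, a zero at the origin,
Bernoulli(p) on the positive half-line. -/
def IsMuTilde (p : ℝ) (μt : Measure Config) : Prop :=
  IsProbabilityMeasure μt ∧
  ∀ (S : Finset ℤ) (σ : ℤ → Bool),
    μt {ω : Config | ∀ x ∈ S, ω x = σ x} =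
      ∏ x ∈ S, ENNReal.ofReal
        (if x < 0 then (if σ x then 1 else 0)
         else if x = 0 then (if σ x then 0 else 1)
         else (if σ x then p else 1 - p))

/-- The law at time `t` of the process seen from the front started from `π`. -/
def Qt (E : EastProcess) (t : ℝ) (π : Measure Config) : Measure Config :=
  Measure.map (θL 0) (π.bind fun ω => E.P t ω)



/-! ### Semigroup and resolvent -/

/-- The semigroup acting on functions. -/
def Pf (E : EastProcess) (f : Config → ℝ) (t : ℝ) (ω : Config) : ℝ := ∫ η, f η ∂(E.P t ω)

lemma bdd_of_cont {f : Config → ℝ} (hf : Continuous f) : ∃ C, 0 ≤ C ∧ ∀ ω, |f ω| ≤ C := by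
  obtain ⟨C, hC⟩ := isCompact_univ.exists_bound_of_continuousOn hf.continuousOn
  exact ⟨C, (abs_nonneg _).trans (hC (fun _ => true) trivial), fun ω => hC ω trivial⟩

lemma integrable_of_cont (E : EastProcess) {f : Config → ℝ} (hf : Continuous f) (t : ℝ)
    (ω : Config) : Integrable f (E.P t ω) := by
  have := E.markov t
  obtain ⟨C, -, hC⟩ := bdd_of_cont hf
  exact Integrable.of_bound hf.measurable.aestronglyMeasurable C (ae_of_all _ hC)

lemma abs_Pf_le (E : EastProcess) {f : Config → ℝ} {C : ℝ}
    (hC : ∀ ω, |f ω| ≤ C) (t : ℝ) (ω : Config) : |Pf E f t ω| ≤ C := by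
  have := E.markov t
  have := norm_integral_le_of_norm_le_const (μ := E.P t ω) (f := f) (ae_of_all _ hC)
  simpa [Pf] using this

lemma Pf_zero (E : EastProcess) {f : Config → ℝ} (hf : Continuous f) (ω : Config) :
    Pf E f 0 ω = f ω := by
  simp [Pf, E.P0, Kernel.id_apply]

lemma Pf_add (E : EastProcess) {f : Config → ℝ} (hf : Continuous f) {s t : ℝ} (hs : 0 ≤ s)
    (ht : 0 ≤ t) (ω : Config) : Pf E f (t + s) ω = ∫ η, Pf E f s η ∂(E.P t ω) := by
  have h := integrable_of_cont E hf (t + s) ω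
  unfold Pf
  rw [E.semigroup s t hs ht] at h ⊢
  exact Kernel.integral_comp h

lemma Pf_meas (E : EastProcess) {f : Config → ℝ} (hf : Continuous f) :
    StronglyMeasurable (Function.uncurry (Pf E f)) := by
  refine stronglyMeasurable_uncurry_of_continuous_of_stronglyMeasurable ?_ ?_
  · intro ω
    exact E.timeCont f hf ω
  · intro t
    have := E.markov t
    exact hf.measurable.stronglyMeasurable.integral_kernel

/-- The resolvent. -/
def Res (E : EastProcess) (l : ℝ) (h : Config → ℝ) (ω : Config) : ℝ :=
  ∫ s in Set.Ioi (0 : ℝ), Real.exp (-l * s) * Pf E h s ω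

lemma exp_int {l : ℝ} (hl : 0 < l) (c : ℝ) :
    IntegrableOn (fun s : ℝ => Real.exp (-l * s)) (Set.Ioi c) :=
  exp_neg_integrableOn_Ioi c hl

lemma phi_cont (E : EastProcess) (l : ℝ) {h : Config → ℝ} (hh : Continuous h) (ω : Config) :
    Continuous fun s : ℝ => Real.exp (-l * s) * Pf E h s ω := by
  have := E.timeCont h hh ω
  unfold Pf
  fun_prop

lemma phi_int (E : EastProcess) {l : ℝ} (hl : 0 < l) {h : Config → ℝ} (hh : Continuous h)
    (ω : Config) (c : ℝ) :
    IntegrableOn (fun s : ℝ => Real.exp (-l * s) * Pf E h s ω) (Set.Ioi c) := by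
  obtain ⟨C, -, hC⟩ := bdd_of_cont hh
  refine Integrable.mono' ((exp_int hl c).mul_const C)
    (phi_cont E l hh ω).measurable.aestronglyMeasurable (ae_of_all _ fun s => ?_)
  rw [norm_mul, Real.norm_of_nonneg (Real.exp_pos _).le]
  exact mul_le_mul_of_nonneg_left (abs_Pf_le E hC s ω) (Real.exp_pos _).le

lemma Res_cont (E : EastProcess) {l : ℝ} (hl : 0 < l) {h : Config → ℝ} (hh : Continuous h) :
    Continuous (Res E l h) := by
  obtain ⟨C, -, hC⟩ := bdd_of_cont hh
  refine continuous_of_dominated (bound := fun s => Real.exp (-l * s) * C) ?_ ?_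
    ((exp_int hl 0).mul_const C) ?_
  · intro ω
    exact (phi_cont E l hh ω).measurable.aestronglyMeasurable
  · intro ω
    refine ae_of_all _ fun s => ?_
    rw [norm_mul, Real.norm_of_nonneg (Real.exp_pos _).le]
    exact mul_le_mul_of_nonneg_left (abs_Pf_le E hC s ω) (Real.exp_pos _).le
  · filter_upwards [ae_restrict_mem measurableSet_Ioi] with s hs
    exact continuous_const.mul (E.feller s (le_of_lt hs) h hh)

lemma Pf_Res (E : EastProcess) {l : ℝ} (hl : 0 < l) {h : Config → ℝ} (hh : Continuous h)
    {t : ℝ} (ht : 0 ≤ t) (ω : Config) :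
    Pf E (Res E l h) t ω =
      Real.exp (l * t) * ∫ s in Set.Ioi t, Real.exp (-l * s) * Pf E h s ω := by
  have := E.markov t
  obtain ⟨C, -, hC⟩ := bdd_of_cont hh
  have h1 : Pf E (Res E l h) t ω =
      ∫ s in Set.Ioi (0 : ℝ), ∫ η, Real.exp (-l * s) * Pf E h s η ∂(E.P t ω) := by
    unfold Pf Res
    refine integral_integral_swap (f := fun η s => Real.exp (-l * s) * Pf E h s η) ?_
    have hb : Integrable (fun z : Config × ℝ => (C : ℝ) * Real.exp (-l * z.2))
        ((E.P t ω).prod (volume.restrict (Set.Ioi (0 : ℝ)))) :=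
      (integrable_const C).mul_prod (exp_int hl 0)
    refine hb.mono' ?_ (ae_of_all _ ?_)
    · have hm : StronglyMeasurable fun z : Config × ℝ => Pf E h z.2 z.1 :=
        (Pf_meas E hh).comp_measurable measurable_swap
      have he : Measurable fun z : Config × ℝ => Real.exp (-l * z.2) := by fun_prop
      exact (he.stronglyMeasurable.mul hm).aestronglyMeasurable
    · rintro ⟨η, s⟩
      simp only [Function.uncurry]
      rw [norm_mul, Real.norm_of_nonneg (Real.exp_pos _).le, mul_comm]
      exact mul_le_mul_of_nonneg_right (abs_Pf_le E hC s η) (Real.exp_pos _).le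
  rw [h1]
  have h2 : ∫ s in Set.Ioi t, Real.exp (-l * s) * Pf E h s ω =
      ∫ s in Set.Ioi (0 : ℝ), Real.exp (-l * (t + s)) * Pf E h (t + s) ω := by
    have := (measurePreserving_add_left (volume : Measure ℝ) t).setIntegral_preimage_emb
      (measurableEmbedding_addLeft t) (fun s => Real.exp (-l * s) * Pf E h s ω) (Set.Ioi t)
    rw [← this]
    simp
  rw [h2, ← integral_const_mul]
  refine setIntegral_congr_fun measurableSet_Ioi fun s hs => ?_
  rw [integral_const_mul, ← Pf_add E hh (le_of_lt hs) ht, ← mul_assoc, ← Real.exp_add]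
  congr 2
  ring

lemma Res_deriv (E : EastProcess) {l : ℝ} (hl : 0 < l) {h : Config → ℝ} (hh : Continuous h)
    (ω : Config) :
    HasDerivWithinAt (fun t => Pf E (Res E l h) t ω) (l * Res E l h ω - h ω) (Set.Ici 0) 0 := by
  set φ : ℝ → ℝ := fun s => Real.exp (-l * s) * Pf E h s ω with hφ
  have hc : Continuous φ := phi_cont E l hh ω
  have hd : HasDerivAt (fun t => ∫ s in (0:ℝ)..t, φ s) (φ 0) 0 :=
    intervalIntegral.integral_hasDerivAt_right (hc.intervalIntegrable _ _)
      (hc.stronglyMeasurableAtFilter _ _) hc.continuousAt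
  have he : HasDerivAt (fun t : ℝ => Real.exp (l * t)) l 0 := by
    have := ((hasDerivAt_id (0:ℝ)).const_mul l).exp
    simpa using this
  have hG := he.mul (hd.const_sub (Res E l h ω))
  have h0 : φ 0 = h ω := by simp [hφ, Pf_zero E hh]
  have hG' : HasDerivAt (fun t => Real.exp (l * t) * (Res E l h ω - ∫ s in (0:ℝ)..t, φ s))
      (l * Res E l h ω - h ω) 0 := by
    refine hG.congr_deriv ?_
    simp [h0, sub_eq_add_neg]
  refine hG'.hasDerivWithinAt.congr_of_mem ?_ (by simp)
  intro t ht
  rw [Pf_Res E hl hh ht]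
  congr 1
  have := intervalIntegral.integral_interval_add_Ioi (phi_int E hl hh ω 0) (phi_int E hl hh ω t)
  rw [Res, ← this]
  simp [hφ]

/-- Maximum principle. -/
lemma max_principle (E : EastProcess) {l : ℝ} (hl : 0 < l) {v : Config → ℝ} (hv : Continuous v)
    (hd : ∀ ω, HasDerivWithinAt (fun t => Pf E v t ω) (l * v ω) (Set.Ici 0) 0) (ω : Config) :
    v ω ≤ 0 := by
  obtain ⟨m, -, hm⟩ := isCompact_univ.exists_isMaxOn ⟨fun _ => true, trivial⟩ hv.continuousOn
  have hm' : ∀ η, v η ≤ v m := fun η => hm (Set.mem_univ η)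
  refine (hm' ω).trans ?_
  have key : l * v m ≤ 0 := by
    have h1 := (hasDerivWithinAt_iff_tendsto_slope.1 (hd m))
    have : (𝓝[Set.Ici (0:ℝ) \ {0}] 0).NeBot := by
      rw [Set.Ici_sdiff_left]; infer_instance
    refine le_of_tendsto h1 ?_
    filter_upwards [self_mem_nhdsWithin] with t ht
    have ht0 : 0 < t := lt_of_le_of_ne ht.1 (fun h => ht.2 h.symm)
    have := E.markov t
    have hle : Pf E v t m ≤ v m := by
      have := integral_mono (integrable_of_cont E hv t m) (integrable_const (v m)) hm'
      simpa [Pf] using this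
    rw [slope_def_field, Pf_zero E hv]
    exact div_nonpos_of_nonpos_of_nonneg (by linarith) (by linarith)
  by_contra hcon
  push Not at hcon
  nlinarith [mul_pos hl hcon]

/-! ### Cylinder functions -/

lemma cyl_cont {f : Config → ℝ} (hf : IsCylinder f) : Continuous f := by
  obtain ⟨S, hS⟩ := hf
  let ext : ({x // x ∈ S} → Bool) → Config := fun g x => if hx : x ∈ S then g ⟨x, hx⟩ else true
  have : f = (fun g => f (ext g)) ∘ (fun ω : Config => fun x : {x // x ∈ S} => ω x) := by
    funext ω
    refine hS _ _ fun x hx => ?_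
    simp only [ext]
    rw [dif_pos (Finset.mem_coe.1 hx)]
  rw [this]
  exact continuous_of_discreteTopology.comp (by fun_prop)

lemma flip_cont (x : ℤ) : Continuous fun ω : Config => flipAt ω x := by
  refine continuous_pi fun y => ?_
  unfold flipAt
  by_cases h : y = x
  · simp only [h, if_true]
    exact (continuous_of_discreteTopology (f := Bool.not)).comp (continuous_apply x)
  · simp only [h, if_false]
    exact continuous_apply y

lemma gen_cont (p : ℝ) {f : Config → ℝ} (hf : IsCylinder f) : Continuous (eastGen p f) := by
  have hc := cyl_cont hf
  obtain ⟨S, hS⟩ := hf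
  have : eastGen p f = fun ω => ∑ x ∈ S, (if ω (x + 1) = false then (1 : ℝ) else 0) *
    (if ω x = false then p else 1 - p) * (f (flipAt ω x) - f ω) := by
    funext ω
    refine tsum_eq_sum fun x hx => ?_
    have : f (flipAt ω x) = f ω := by
      refine hS _ _ fun y hy => ?_
      have : y ≠ x := by rintro rfl; exact hx hy
      simp [flipAt, this]
    simp [this]
  rw [this]
  refine continuous_finsetSum _ fun x _ => ?_
  have h1 : Continuous fun ω : Config => (if ω (x + 1) = false then (1 : ℝ) else 0) :=
    (continuous_of_discreteTopology (f := fun b : Bool => if b = false then (1:ℝ) else 0)).comp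
      (continuous_apply (x+1))
  have h2 : Continuous fun ω : Config => (if ω x = false then p else 1 - p) :=
    (continuous_of_discreteTopology (f := fun b : Bool => if b = false then p else 1 - p)).comp
      (continuous_apply x)
  exact (h1.mul h2).mul ((hc.comp (flip_cont x)).sub hc)

/-- Exponential growth bound from a Lyapunov inequality. -/
lemma lyapunov (E : EastProcess) {l : ℝ} (hl : 0 < l) {f : Config → ℝ} (hf : IsCylinder f)
    (hL : ∀ ω, eastGen E.p f ω ≤ l * f ω) {t : ℝ} (ht : 0 ≤ t) (ω : Config) :
    Pf E f t ω ≤ Real.exp (l * t) * f ω := by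
  have hc := cyl_cont hf
  set h : Config → ℝ := fun ω => l * f ω - eastGen E.p f ω with hh
  have hhc : Continuous h := (continuous_const.mul hc).sub (gen_cont E.p hf)
  have hRc := Res_cont E hl hhc
  have hsub : ∀ (a b : Config → ℝ), Continuous a → Continuous b → ∀ t ω,
      Pf E (fun η => a η - b η) t ω = Pf E a t ω - Pf E b t ω := fun a b ha hb t ω =>
    integral_sub (integrable_of_cont E ha t ω) (integrable_of_cont E hb t ω)
  have e1 : ∀ ω, f ω - Res E l h ω ≤ 0 := by
    refine max_principle E hl (hc.sub hRc) fun ω => ?_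
    have := (E.generator f hf ω).sub (Res_deriv E hl hhc ω)
    simp_rw [hsub f _ hc hRc]
    refine this.congr_deriv ?_
    simp only [hh]; ring
  have e2 : ∀ ω, Res E l h ω - f ω ≤ 0 := by
    refine max_principle E hl (hRc.sub hc) fun ω => ?_
    have := (Res_deriv E hl hhc ω).sub (E.generator f hf ω)
    simp_rw [hsub _ f hRc hc]
    refine this.congr_deriv ?_
    simp only [hh]; ring
  have e : f = Res E l h := funext fun ω => le_antisymm (by linarith [e1 ω]) (by linarith [e2 ω])
  have h0 : ∀ s, 0 ≤ Pf E h s ω := fun s => integral_nonneg fun η => by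
    simp only [hh, Pi.zero_apply]; linarith [hL η]
  calc Pf E f t ω = Pf E (Res E l h) t ω := by rw [← e]
    _ = Real.exp (l * t) * ∫ s in Set.Ioi t, Real.exp (-l * s) * Pf E h s ω :=
        Pf_Res E hl hhc ht ω
    _ ≤ Real.exp (l * t) * Res E l h ω := by
        refine mul_le_mul_of_nonneg_left ?_ (Real.exp_pos _).le
        refine setIntegral_mono_set (phi_int E hl hhc ω 0) (ae_of_all _ fun s => ?_) ?_
        · exact mul_nonneg (Real.exp_pos _).le (h0 s)
        · exact (Set.Ioi_subset_Ioi ht).eventuallyLE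
    _ = _ := by rw [← e]

/-! ### The truncated front -/

/-- The set whose minimum is the truncated front. -/
def XS (N : ℕ) (ω : Config) : Set ℤ := {x | -(N : ℤ) ≤ x ∧ (ω x = false ∨ (N : ℤ) < x)}

/-- The front truncated to `[-N, N+1]`. -/
def XN (N : ℕ) (ω : Config) : ℤ := sInf (XS N ω)

lemma XS_bdd (N : ℕ) (ω : Config) : BddBelow (XS N ω) := ⟨-(N : ℤ), fun _ hx => hx.1⟩

lemma XN_mem (N : ℕ) (ω : Config) : XN N ω ∈ XS N ω :=
  Int.csInf_mem ⟨(N : ℤ) + 1, by constructor <;> [omega; (right; omega)]⟩ (XS_bdd N ω)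

lemma XN_le {N : ℕ} {ω : Config} {x : ℤ} (hx : x ∈ XS N ω) : XN N ω ≤ x :=
  csInf_le (XS_bdd N ω) hx

lemma XN_le' (N : ℕ) (ω : Config) : XN N ω ≤ N + 1 :=
  XN_le ⟨by omega, Or.inr (by omega)⟩

lemma XN_eq {N : ℕ} {ω : Config} {m : ℤ} (hm : m ∈ XS N ω) (h : ∀ x ∈ XS N ω, m ≤ x) :
    XN N ω = m := le_antisymm (XN_le hm) (h _ (XN_mem N ω))

lemma flip_ne {ω : Config} {x y : ℤ} (h : y ≠ x) : flipAt ω x y = ω y := by simp [flipAt, h]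

lemma mem_flip {N : ℕ} {ω : Config} {x y : ℤ} (h : y ≠ x) :
    y ∈ XS N (flipAt ω x) ↔ y ∈ XS N ω := by simp [XS, flip_ne h]

lemma XN_flip_far {N : ℕ} {ω : Config} {x : ℤ} (hx : ω (x + 1) = false)
    (h1 : x ≠ XN N ω) (h2 : x ≠ XN N ω - 1) : XN N (flipAt ω x) = XN N ω := by
  refine XN_eq ((mem_flip (Ne.symm h1)).2 (XN_mem N ω)) fun y hy => ?_
  by_cases hyx : y = x
  · subst hyx
    by_contra hlt
    push Not at hlt
    have : y + 1 ∈ XS N ω := ⟨by have := hy.1; omega, Or.inl hx⟩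
    have := XN_le this
    omega
  · exact XN_le ((mem_flip hyx).1 hy)

lemma XN_flip_near {N : ℕ} {ω : Config} {x : ℤ} (hx : ω (x + 1) = false) :
    |XN N (flipAt ω x) - XN N ω| ≤ 1 := by
  by_cases h1 : x = XN N ω
  · -- the new front is `x` or `x + 1`
    have hm := XN_mem N ω
    have ha : x + 1 ∈ XS N (flipAt ω x) :=
      (mem_flip (by omega)).2 ⟨by have := hm.1; omega, Or.inl hx⟩
    have hb := XN_le ha
    have hc : x ≤ XN N (flipAt ω x) := by
      by_contra hlt
      have := XN_le ((mem_flip (by omega)).1 (XN_mem N (flipAt ω x)))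
      omega
    rw [abs_le]; omega
  · by_cases h2 : x = XN N ω - 1
    · have hm := XN_mem N ω
      have hb := XN_le ((mem_flip (x := x) (by omega)).2 hm)
      have hc : x ≤ XN N (flipAt ω x) := by
        by_contra hlt
        have := XN_le ((mem_flip (by omega)).1 (XN_mem N (flipAt ω x)))
        omega
      rw [abs_le]; omega
    · simp [XN_flip_far hx h1 h2]

lemma XN_eq_front {N : ℕ} {ω : Config} (hω : ω ∈ LO) (hN : |front ω| ≤ N) :
    XN N ω = front ω := by
  obtain ⟨⟨y, hy⟩, hne⟩ := hω
  have hb : BddBelow {x : ℤ | ω x = false} := by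
    refine ⟨y, fun x hx => ?_⟩
    by_contra hlt
    have := hy x (by omega)
    simp_all
  have hmem : ω (front ω) = false := Int.csInf_mem hne hb
  rw [abs_le] at hN
  refine XN_eq ⟨hN.1, Or.inl hmem⟩ fun x hx => ?_
  rcases hx.2 with h | h
  · exact csInf_le hb h
  · omega

/-- Exponential of the truncated front. -/
def fN (a : ℝ) (N : ℕ) (ω : Config) : ℝ := Real.exp (a * |(XN N ω : ℝ)|)

lemma fN_cyl (a : ℝ) (N : ℕ) : IsCylinder (fN a N) := by
  refine ⟨Finset.Icc (-(N : ℤ)) N, fun ω ω' h => ?_⟩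
  have : XS N ω = XS N ω' := by
    ext x
    simp only [XS, Set.mem_ofPred_eq]
    by_cases hx : -(N : ℤ) ≤ x ∧ x ≤ N
    · rw [h x (by simpa using hx)]
    · constructor <;> rintro ⟨h1, -⟩ <;> exact ⟨h1, Or.inr (by omega)⟩
  simp [fN, XN, this]

lemma fN_gen (a : ℝ) (ha : 0 ≤ a) (N : ℕ) (p : ℝ) (hp0 : 0 < p) (hp1 : p < 1) (ω : Config) :
    eastGen p (fN a N) ω ≤ 2 * (Real.exp a - 1) * fN a N ω := by
  have hE : 0 ≤ Real.exp a - 1 := by linarith [Real.one_le_exp ha]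
  have hF : 0 < fN a N ω := Real.exp_pos _
  have hterm : ∀ x : ℤ, (if ω (x + 1) = false then (1 : ℝ) else 0) *
    (if ω x = false then p else 1 - p) * (fN a N (flipAt ω x) - fN a N ω) ≤
      (Real.exp a - 1) * fN a N ω := by
    intro x
    by_cases hx : ω (x + 1) = false
    · have hr0 : 0 ≤ (if ω x = false then p else 1 - p) := by split_ifs <;> linarith
      have hr1 : (if ω x = false then p else 1 - p) ≤ 1 := by split_ifs <;> linarith
      have hd : fN a N (flipAt ω x) - fN a N ω ≤ (Real.exp a - 1) * fN a N ω := by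
        have h1 : |(XN N (flipAt ω x) : ℝ)| ≤ 1 + |(XN N ω : ℝ)| := by
          have h2 : |(XN N (flipAt ω x) : ℝ) - (XN N ω : ℝ)| ≤ 1 := by
            exact_mod_cast XN_flip_near (N := N) hx
          have := abs_sub_abs_le_abs_sub (XN N (flipAt ω x) : ℝ) (XN N ω : ℝ)
          linarith
        have h3 : fN a N (flipAt ω x) ≤ Real.exp a * fN a N ω := by
          unfold fN
          rw [← Real.exp_add]
          apply Real.exp_le_exp.2
          nlinarith
        linarith
      rw [if_pos hx, one_mul]
      nlinarith [mul_nonneg hE hF.le, mul_le_mul_of_nonneg_left hd hr0,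
        mul_le_mul_of_nonneg_right hr1 (mul_nonneg hE hF.le)]
    · rw [if_neg hx]
      simpa using mul_nonneg hE hF.le
  unfold eastGen
  rw [tsum_eq_sum (s := {XN N ω, XN N ω - 1})]
  · rw [Finset.sum_pair (by omega)]
    have h1 := hterm (XN N ω)
    have h2 := hterm (XN N ω - 1)
    linarith
  · intro x hx
    simp only [Finset.mem_insert, Finset.mem_singleton, not_or] at hx
    by_cases h : ω (x + 1) = false
    · simp [fN, XN_flip_far h hx.1 hx.2]
    · simp [h]

lemma LO_meas : MeasurableSet LO := by
  have hs : ∀ (x : ℤ) (b : Bool), MeasurableSet {ω : Config | ω x = b} := fun x b =>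
    measurableSet_eq_fun (measurable_pi_apply x) measurable_const
  have : LO = (⋃ y : ℤ, ⋂ x : ℤ, ⋂ _ : x < y, {ω : Config | ω x = true}) ∩
      ⋃ x : ℤ, {ω : Config | ω x = false} := by
    ext ω; simp [LO]
  rw [this]
  exact (MeasurableSet.iUnion fun y => MeasurableSet.iInter fun x => MeasurableSet.iInter fun _ =>
    hs x true).inter (MeasurableSet.iUnion fun x => hs x false)

lemma fN_bound (E : EastProcess) {ω : Config} (hω : ω ∈ LO₀) {t : ℝ} (ht : 1 ≤ t) (N : ℕ) :
    ∫⁻ η, ENNReal.ofReal (fN t⁻¹ N η) ∂(E.P t ω) ≤ ENNReal.ofReal (Real.exp 4) := by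
  have ht0 : 0 < t := by linarith
  have ha : 0 < t⁻¹ := inv_pos.2 ht0
  have hl : 0 < 2 * (Real.exp t⁻¹ - 1) := by linarith [Real.add_one_lt_exp ha.ne']
  have hb := lyapunov E hl (fN_cyl t⁻¹ N) (fN_gen t⁻¹ ha.le N E.p E.hp0 E.hp1) ht0.le ω
  have hX : fN t⁻¹ N ω = 1 := by
    have : XN N ω = 0 := by
      rw [XN_eq_front hω.1 (by rw [hω.2]; simp), hω.2]
    simp [fN, this]
  rw [← ofReal_integral_eq_lintegral_ofReal
    (integrable_of_cont E (cyl_cont (fN_cyl t⁻¹ N)) t ω) (ae_of_all _ fun _ => (Real.exp_pos _).le)]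
  refine ENNReal.ofReal_le_ofReal (hb.trans ?_)
  rw [hX, mul_one]
  apply Real.exp_le_exp.2
  have h1 : t⁻¹ ≤ 1 := inv_le_one_of_one_le₀ ht
  have h2 := Real.abs_exp_sub_one_le (x := t⁻¹) (by rwa [abs_of_pos ha])
  rw [abs_of_pos ha] at h2
  have h3 := (abs_le.1 h2).2
  have h4 : t⁻¹ * t = 1 := inv_mul_cancel₀ ht0.ne'
  nlinarith

/-- **Moment bounds for the front** (Lemma 3.4 of the paper): for every `r ≥ 1` there is a
constant `K < ∞` depending only on `r` such that for every East process, every `ω ∈ LO₀` and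
every `t ≥ 1`, `E_ω[|X(ω(t))|^r] ≤ K t^r`. -/
theorem front_moment_bounds :
    ∀ r : ℕ, 1 ≤ r → ∃ K : ℝ,
      ∀ E : EastProcess, 0 < gap E →
        ∀ ω ∈ LO₀, ∀ t : ℝ, 1 ≤ t →
          (∫ η in LO, |(front η : ℝ)| ^ r ∂(E.P t ω)) ≤ K * t ^ r := by
  intro r _
  refine ⟨(r.factorial : ℝ) * Real.exp 4, fun E _ ω hω t ht => ?_⟩
  have ht0 : 0 < t := by linarith
  have hR : 0 ≤ (r.factorial : ℝ) * Real.exp 4 * t ^ r := by positivity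
  by_cases hint : Integrable (fun η => |(front η : ℝ)| ^ r) ((E.P t ω).restrict LO)
  swap
  · rw [integral_undef hint]; exact hR
  rw [integral_eq_lintegral_of_nonneg_ae (ae_of_all _ fun η => by positivity) hint.1]
  refine ENNReal.toReal_le_of_le_ofReal hR ?_
  set c : ℝ := (r.factorial : ℝ) * t ^ r with hc
  have hc0 : 0 ≤ c := by positivity
  have hm : ∀ N, Measurable fun η => ENNReal.ofReal (fN t⁻¹ N η) := fun N =>
    (cyl_cont (fN_cyl t⁻¹ N)).measurable.ennreal_ofReal
  calc ∫⁻ η in LO, ENNReal.ofReal (|(front η : ℝ)| ^ r) ∂(E.P t ω)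
      ≤ ∫⁻ η in LO, ENNReal.ofReal c *
          liminf (fun N : ℕ => ENNReal.ofReal (fN t⁻¹ N η)) atTop ∂(E.P t ω) := by
        refine setLIntegral_mono' LO_meas fun η hη => ?_
        have hev : (fun N : ℕ => ENNReal.ofReal (fN t⁻¹ N η)) =ᶠ[atTop]
            fun _ => ENNReal.ofReal (Real.exp (t⁻¹ * |(front η : ℝ)|)) := by
          filter_upwards [eventually_ge_atTop (front η).natAbs] with N hN
          rw [fN, XN_eq_front hη (by rw [Int.abs_eq_natAbs]; exact_mod_cast hN)]
        rw [liminf_congr hev, liminf_const, ← ENNReal.ofReal_mul hc0]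
        apply ENNReal.ofReal_le_ofReal
        have h := Real.pow_div_factorial_le_exp (x := t⁻¹ * |(front η : ℝ)|) (by positivity) r
        rw [div_le_iff₀ (by positivity)] at h
        calc |(front η : ℝ)| ^ r = t ^ r * (t⁻¹ * |(front η : ℝ)|) ^ r := by
              rw [← mul_pow, mul_inv_cancel_left₀ ht0.ne']
          _ ≤ t ^ r * (Real.exp (t⁻¹ * |(front η : ℝ)|) * r.factorial) := by gcongr
          _ = _ := by rw [hc]; ring
    _ ≤ ∫⁻ η, ENNReal.ofReal c *
          liminf (fun N : ℕ => ENNReal.ofReal (fN t⁻¹ N η)) atTop ∂(E.P t ω) :=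
        setLIntegral_le_lintegral _ _
    _ = ENNReal.ofReal c *
          ∫⁻ η, liminf (fun N : ℕ => ENNReal.ofReal (fN t⁻¹ N η)) atTop ∂(E.P t ω) :=
        lintegral_const_mul' _ _ ENNReal.ofReal_ne_top
    _ ≤ ENNReal.ofReal c *
          liminf (fun N : ℕ => ∫⁻ η, ENNReal.ofReal (fN t⁻¹ N η) ∂(E.P t ω)) atTop := by
        gcongr
        exact lintegral_liminf_le hm
    _ ≤ ENNReal.ofReal c * ENNReal.ofReal (Real.exp 4) := by
        gcongr
        refine (liminf_le_liminf (Eventually.of_forall fun N => fN_bound E hω ht N)).trans ?_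
        simp
    _ = ENNReal.ofReal ((r.factorial : ℝ) * Real.exp 4 * t ^ r) := by
        rw [← ENNReal.ofReal_mul hc0, hc]
        congr 1
        ring

end
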